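/- arXiv:2103.11842 — 2 statements merged into one kernel-verified Lean document; each statement's English description precedes it below -/
import Mathlib

section
/- The improper integral over the real line ∫_{−∞}^{∞} (i−3x)/((x−i)⁴(x+i)³) dx, where the integrand is viewed as a function from ℝ to ℂ, equals −π/2. -/
/-!
Partial fractions give, with `u = 1 / (x - i)` and `v = 1 / (x + i)`,
`(i - 3x) u⁴ v³ = u⁴/4 + 3u²/16 + i v³/4 + 5v²/16 + (i/4)(u - v)`,
and `(i/4)(u - v) = -(1/2) / (1 + x²)`. So the integrand has the explicit antiderivative
`-u³/12 - 3u/16 - i v²/8 - 5v/16 - (arctan x)/2`, whose rational part vanishes at `±∞`;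
the `arctan` part contributes `-π/2`. Integrability follows by comparison with `3 / (1 + x²)`.
-/

open Complex MeasureTheory Real

open Filter Topology in
lemma tendsto_inv_ofReal_add (c : ℂ) {l : Filter ℝ}
    (hl : Tendsto (fun x : ℝ => |x|) l atTop) :
    Tendsto (fun x : ℝ => ((x : ℂ) + c)⁻¹) l (𝓝 0) := by
  apply tendsto_inv₀_cobounded.comp
  rw [← tendsto_norm_atTop_iff_cobounded]
  refine tendsto_atTop_mono (fun x => ?_) (tendsto_atTop_add_const_right _ (-‖c‖) hl)
  have h := norm_sub_le ((x : ℂ) + c) c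
  rw [add_sub_cancel_right, Complex.norm_real, Real.norm_eq_abs] at h
  linarith

lemma ofReal_add_I_ne (x : ℝ) : (x : ℂ) + I ≠ 0 := fun h => by
  simpa using congrArg Complex.im h

lemma ofReal_sub_I_ne (x : ℝ) : (x : ℂ) - I ≠ 0 := fun h => by
  simpa using congrArg Complex.im h

lemma integrable_integrand :
    Integrable fun x : ℝ => (I - 3 * (x : ℂ)) / (((x : ℂ) - I) ^ 4 * ((x : ℂ) + I) ^ 3) := by
  refine (integrable_inv_one_add_sq.const_mul 3).mono' ?_ (ae_of_all _ fun x => ?_)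
  · refine (Continuous.div (by fun_prop) (by fun_prop) fun x => ?_).aestronglyMeasurable
    exact mul_ne_zero (pow_ne_zero _ (ofReal_sub_I_ne x)) (pow_ne_zero _ (ofReal_add_I_ne x))
  · have hsub : ‖(x : ℂ) - I‖ ^ 2 = 1 + x ^ 2 := by
      rw [Complex.sq_norm, Complex.normSq_apply]; simp; ring
    have hadd : ‖(x : ℂ) + I‖ ^ 2 = 1 + x ^ 2 := by
      rw [Complex.sq_norm, Complex.normSq_apply]; simp; ring
    have hnum : ‖I - 3 * (x : ℂ)‖ ^ 2 = 1 + 9 * x ^ 2 := by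
      rw [Complex.sq_norm, Complex.normSq_apply]; simp; ring
    have hnum' : ‖I - 3 * (x : ℂ)‖ ≤ 3 * ‖(x : ℂ) + I‖ :=
      le_of_sq_le_sq (by rw [mul_pow, hnum, hadd]; nlinarith) (by positivity)
    have hpos : 0 < ‖(x : ℂ) + I‖ := norm_pos_iff.2 (ofReal_add_I_ne x)
    have h4 : ‖(x : ℂ) - I‖ ^ 4 = (1 + x ^ 2) ^ 2 := by rw [← hsub]; ring
    have h3 : ‖(x : ℂ) + I‖ ^ 3 = (1 + x ^ 2) * ‖(x : ℂ) + I‖ := by rw [← hadd]; ring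
    rw [norm_div, norm_mul, norm_pow, norm_pow, h4, h3, div_le_iff₀ (by positivity)]
    refine hnum'.trans ?_
    have h1 : 1 ≤ (1 + x ^ 2) ^ 2 := one_le_pow₀ (by nlinarith [sq_nonneg x])
    have h2 : 3 * (1 + x ^ 2)⁻¹ * ((1 + x ^ 2) ^ 2 * ((1 + x ^ 2) * ‖(x : ℂ) + I‖))
        = (1 + x ^ 2) ^ 2 * (3 * ‖(x : ℂ) + I‖) := by
      have : 1 + x ^ 2 ≠ 0 := by positivity
      field_simp
    rw [h2]
    exact le_mul_of_one_le_left (by positivity) h1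

/-- The antiderivative of the integrand obtained from its partial fraction expansion. -/
noncomputable def antideriv (x : ℝ) : ℂ :=
  -(1 / 12) * ((x : ℂ) + -I)⁻¹ ^ 3 - 3 / 16 * ((x : ℂ) + -I)⁻¹ - I / 8 * ((x : ℂ) + I)⁻¹ ^ 2
    - 5 / 16 * ((x : ℂ) + I)⁻¹ - 1 / 2 * (Real.arctan x : ℂ)

lemma hasDerivAt_inv_ofReal_add (c : ℂ) (x : ℝ) (h : (x : ℂ) + c ≠ 0) :
    HasDerivAt (fun y : ℝ => ((y : ℂ) + c)⁻¹) (-((x : ℂ) + c)⁻¹ ^ 2) x := by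
  refine (((hasDerivAt_id x).ofReal_comp.add_const c).inv h).congr_deriv ?_
  simp [div_eq_mul_inv]

lemma hasDerivAt_antideriv (x : ℝ) :
    HasDerivAt antideriv
      ((I - 3 * (x : ℂ)) / (((x : ℂ) - I) ^ 4 * ((x : ℂ) + I) ^ 3)) x := by
  have hm := ofReal_sub_I_ne x
  have hp := ofReal_add_I_ne x
  have hu := hasDerivAt_inv_ofReal_add (-I) x (by rwa [← sub_eq_add_neg])
  have hv := hasDerivAt_inv_ofReal_add I x hp
  have ha := (Real.hasDerivAt_arctan x).ofReal_comp
  refine ((((((hu.pow 3).const_mul (-(1 / 12) : ℂ)).sub (hu.const_mul (3 / 16 : ℂ))).sub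
    ((hv.pow 2).const_mul (I / 8))).sub (hv.const_mul (5 / 16 : ℂ))).sub
    (ha.const_mul (1 / 2 : ℂ))).congr_deriv ?_
  have hq : (1 : ℂ) + (x : ℂ) ^ 2 = ((x : ℂ) - I) * ((x : ℂ) + I) := by
    linear_combination I_sq
  push_cast
  rw [hq, ← sub_eq_add_neg]
  field_simp
  ring_nf
  have e2 := I_sq
  have e3 : I ^ 3 = -I := by rw [pow_succ, I_sq]; ring
  have e4 := I_pow_four
  have e5 : I ^ 5 = I := by rw [pow_succ, e4]; ring
  simp only [e2, e3, e4, e5]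
  ring

open Filter Topology in
lemma tendsto_antideriv {l : Filter ℝ} (hl : Tendsto (fun x : ℝ => |x|) l atTop) {a : ℝ}
    (ha : Tendsto Real.arctan l (𝓝 a)) : Tendsto antideriv l (𝓝 (-(1 / 2) * (a : ℂ))) := by
  have hu := tendsto_inv_ofReal_add (-I) hl
  have hv := tendsto_inv_ofReal_add I hl
  have ha' := (Complex.continuous_ofReal.tendsto a).comp ha
  have h := (((((hu.pow 3).const_mul (-(1 / 12) : ℂ)).sub (hu.const_mul (3 / 16 : ℂ))).sub
    ((hv.pow 2).const_mul (I / 8))).sub (hv.const_mul (5 / 16 : ℂ))).sub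
    (ha'.const_mul (1 / 2 : ℂ))
  have e : -(1 / 12) * (0 : ℂ) ^ 3 - 3 / 16 * 0 - I / 8 * 0 ^ 2 - 5 / 16 * 0 - 1 / 2 * (a : ℂ)
      = -(1 / 2) * (a : ℂ) := by ring
  rw [e] at h
  exact h

theorem stmt_5 :
    ∫ x : ℝ, (I - 3 * (x : ℂ)) / (((x : ℂ) - I) ^ 4 * ((x : ℂ) + I) ^ 3) = -(π : ℂ) / 2 := by
  rw [integral_of_hasDerivAt_of_tendsto hasDerivAt_antideriv integrable_integrand
    (tendsto_antideriv Filter.tendsto_abs_atBot_atTop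
      (tendsto_nhds_of_tendsto_nhdsWithin tendsto_arctan_atBot))
    (tendsto_antideriv Filter.tendsto_abs_atTop_atTop
      (tendsto_nhds_of_tendsto_nhdsWithin tendsto_arctan_atTop))]
  push_cast
  ring
end

section
/- The improper integral over the real line ∫_{−∞}^{∞} (3ix³+5x²−3ix−1)/((x−i)⁶(x+i)⁴) dx, where the integrand is viewed as a function from ℝ to ℂ, equals 15π/64. -/
/-!
The numerator vanishes at `x = i`, so the integrand is `(3ix² + 2x - i) / ((x - i)⁵ (x + i)⁴)`.
Its partial fraction expansion consists of `(15/64) (1 + x²)⁻¹`, which combines the two simple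
poles and integrates to `15π/64`, together with multiples of `(x ± i)⁻ᵏ`, `k ≥ 2`. Each of the
latter has the primitive `-(x ± i)¹⁻ᵏ / (k - 1)`, which vanishes at both ends of the line, and so
contributes nothing (`integral_inv_pow`).
-/

open Complex MeasureTheory Real

open Filter Topology in
/-- The hypothesis `hc` holds exactly for `c = I` and `c = -I`. -/
lemma integral_inv_pow (c : ℂ) (hc : ∀ x : ℝ, ‖(x : ℂ) + c‖ ^ 2 = 1 + x ^ 2) (n : ℕ) :
    Integrable (fun x : ℝ => (((x : ℂ) + c) ^ (n + 2))⁻¹) ∧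
      ∫ x : ℝ, (((x : ℂ) + c) ^ (n + 2))⁻¹ = 0 := by
  have hne : ∀ x : ℝ, (x : ℂ) + c ≠ 0 := by
    intro x h
    have h2 := hc x
    rw [h] at h2
    simp only [norm_zero] at h2
    nlinarith [sq_nonneg x]
  have hcont : Continuous (fun x : ℝ => (((x : ℂ) + c) ^ (n + 2))⁻¹) :=
    Continuous.inv₀ (by fun_prop) (fun x => pow_ne_zero _ (hne x))
  have hint : Integrable (fun x : ℝ => (((x : ℂ) + c) ^ (n + 2))⁻¹) := by
    refine integrable_inv_one_add_sq.mono' hcont.aestronglyMeasurable (.of_forall fun x => ?_)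
    rw [norm_inv, norm_pow, ← hc x]
    have h1 : 1 ≤ ‖(x : ℂ) + c‖ := by
      nlinarith [hc x, norm_nonneg ((x : ℂ) + c), sq_nonneg x]
    exact inv_anti₀ (by positivity) (pow_le_pow_right₀ h1 (by omega))
  refine ⟨hint, ?_⟩
  have hderiv : ∀ x : ℝ, HasDerivAt
      (fun x : ℝ => -((n : ℂ) + 1)⁻¹ * (((x : ℂ) + c)⁻¹) ^ (n + 1))
      ((((x : ℂ) + c) ^ (n + 2))⁻¹) x := by
    intro x
    have h0 : HasDerivAt (fun x : ℝ => (x : ℂ) + c) 1 x :=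
      (HasDerivAt.ofReal_comp (hasDerivAt_id x)).add_const c
    have h := ((h0.fun_inv (hne x)).fun_pow (n + 1)).const_mul (-((n : ℂ) + 1)⁻¹)
    refine h.congr_deriv ?_
    have hn : (n : ℂ) + 1 ≠ 0 := by exact_mod_cast Nat.succ_ne_zero n
    have := hne x
    push_cast
    simp only [inv_pow]
    field_simp
    ring
  have hlim : ∀ l : Filter ℝ, Tendsto (fun x : ℝ => |x|) l atTop → Tendsto
      (fun x : ℝ => -((n : ℂ) + 1)⁻¹ * (((x : ℂ) + c)⁻¹) ^ (n + 1)) l (𝓝 0) := by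
    intro l hl
    have h1 : Tendsto (fun x : ℝ => ‖(x : ℂ) + c‖) l atTop :=
      tendsto_atTop_mono (fun x => abs_le_of_sq_le_sq (by linarith [hc x]) (norm_nonneg _)) hl
    have h2 : Tendsto (fun x : ℝ => ((x : ℂ) + c)⁻¹) l (𝓝 0) :=
      tendsto_inv₀_cobounded.comp (tendsto_norm_atTop_iff_cobounded.1 h1)
    simpa using (h2.pow (n + 1)).const_mul (-((n : ℂ) + 1)⁻¹)
  simpa using integral_of_hasDerivAt_of_tendsto hderiv hint
    (hlim _ tendsto_abs_atBot_atTop) (hlim _ tendsto_abs_atTop_atTop)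

lemma partial_fractions (x : ℝ) :
    (3 * I * (x : ℂ) ^ 3 + 5 * (x : ℂ) ^ 2 - 3 * I * (x : ℂ) - 1) /
        (((x : ℂ) - I) ^ 6 * ((x : ℂ) + I) ^ 4) =
      15 / 64 * (((1 + x ^ 2)⁻¹ : ℝ) : ℂ) + -I / 8 * (((x : ℂ) + -I) ^ (3 + 2))⁻¹
        + -1 / 16 * (((x : ℂ) + -I) ^ (0 + 2))⁻¹ + 3 / 16 * (((x : ℂ) + I) ^ (2 + 2))⁻¹
        + -7 * I / 32 * (((x : ℂ) + I) ^ (1 + 2))⁻¹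
        + -11 / 64 * (((x : ℂ) + I) ^ (0 + 2))⁻¹ := by
  have h1 : (x : ℂ) - I ≠ 0 := fun h => by simpa using congrArg im h
  have h2 : (x : ℂ) + I ≠ 0 := fun h => by simpa using congrArg im h
  have h3 : (((1 + x ^ 2)⁻¹ : ℝ) : ℂ) = (((x : ℂ) - I) * ((x : ℂ) + I))⁻¹ := by
    push_cast
    congr 1
    linear_combination I_sq
  have h4 : (3 * I * (x : ℂ) ^ 3 + 5 * (x : ℂ) ^ 2 - 3 * I * (x : ℂ) - 1) =
      ((x : ℂ) - I) * (3 * I * (x : ℂ) ^ 2 + 2 * (x : ℂ) - I) := by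
    linear_combination (3 * (x : ℂ) ^ 2 - 1) * I_sq
  rw [h3, h4, ← sub_eq_add_neg]
  field_simp
  generalize (x : ℂ) = z
  have e2 := I_sq
  grind

theorem stmt_10 :
    ∫ x : ℝ, (3 * I * (x : ℂ) ^ 3 + 5 * (x : ℂ) ^ 2 - 3 * I * (x : ℂ) - 1) / (((x : ℂ) - I) ^ 6 * ((x : ℂ) + I) ^ 4) = 15 * (π : ℂ) / 64 := by
  have hI : ∀ x : ℝ, ‖(x : ℂ) + I‖ ^ 2 = 1 + x ^ 2 := fun x => by
    rw [← normSq_eq_norm_sq, normSq_apply]; simp; ring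
  have hI' : ∀ x : ℝ, ‖(x : ℂ) + -I‖ ^ 2 = 1 + x ^ 2 := fun x => by
    rw [← normSq_eq_norm_sq, normSq_apply]; simp; ring
  obtain ⟨a5, b5⟩ := integral_inv_pow (-I) hI' 3
  obtain ⟨a2, b2⟩ := integral_inv_pow (-I) hI' 0
  obtain ⟨c4, d4⟩ := integral_inv_pow I hI 2
  obtain ⟨c3, d3⟩ := integral_inv_pow I hI 1
  obtain ⟨c2, d2⟩ := integral_inv_pow I hI 0
  have g : Integrable (fun x : ℝ => (((1 + x ^ 2)⁻¹ : ℝ) : ℂ)) := integrable_inv_one_add_sq.ofReal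
  have hg : ∫ x : ℝ, (((1 + x ^ 2)⁻¹ : ℝ) : ℂ) = π := by
    rw [integral_complex_ofReal, integral_univ_inv_one_add_sq]
  have s1 := (g.const_mul (15 / 64)).fun_add (a5.const_mul (-I / 8))
  have s2 := s1.fun_add (a2.const_mul (-1 / 16))
  have s3 := s2.fun_add (c4.const_mul (3 / 16))
  have s4 := s3.fun_add (c3.const_mul (-7 * I / 32))
  simp_rw [partial_fractions]
  rw [integral_add s4 (c2.const_mul _), integral_add s3 (c3.const_mul _),
    integral_add s2 (c4.const_mul _), integral_add s1 (a2.const_mul _),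
    integral_add (g.const_mul _) (a5.const_mul _)]
  simp only [integral_const_mul, hg, b5, b2, d4, d3, d2]
  ring
end
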